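/- For any digraph D without symmetric arcs (no pair of opposite arcs), γ_os(D) ≤ γ*(D), where γ*(D) is the twin domination number of D. -/

import Mathlib

/-! If `S` is twin dominating and there are no symmetric arcs, every vertex outside `S` has an
in-neighbour and an out-neighbour in `S`, and these are distinct. So a vertex outside `S` keeps a
neighbour in `S` when any single vertex is removed, and `S` is itself out-secure dominating. -/

open Finset

variable {V : Type*}

/-- `S` is an out-dominating set of the digraph with arc relation `A`. -/
def OutDom (A : V → V → Prop) (S : Finset V) : Prop :=
  ∀ v : V, v ∉ S → ∃ u ∈ S, A u v

/-- `S` is an in-dominating set. -/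
def InDom (A : V → V → Prop) (S : Finset V) : Prop :=
  ∀ v : V, v ∉ S → ∃ u ∈ S, A v u

/-- `S` is a dominating set of the underlying undirected graph of the digraph `A`. -/
def DomG (A : V → V → Prop) (S : Finset V) : Prop :=
  ∀ v : V, v ∉ S → ∃ u ∈ S, A u v ∨ A v u

/-- Secure dominating set of the underlying undirected graph. -/
def SDS [DecidableEq V] (A : V → V → Prop) (S : Finset V) : Prop :=
  DomG A S ∧ ∀ v : V, v ∉ S → ∃ u ∈ S, (A u v ∨ A v u) ∧ DomG A (insert v (S.erase u))

/-- Out-secure dominating set (OSDS). -/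
def OSDS [DecidableEq V] (A : V → V → Prop) (S : Finset V) : Prop :=
  DomG A S ∧ ∀ v : V, v ∉ S → ∃ u ∈ S, A u v ∧ DomG A (insert v (S.erase u))

/-- Secure out-dominating set (SODS). -/
def SODS [DecidableEq V] (A : V → V → Prop) (S : Finset V) : Prop :=
  OutDom A S ∧ ∀ v : V, v ∉ S → ∃ u ∈ S, (A v u ∨ A u v) ∧ OutDom A (insert v (S.erase u))

/-- Out-secure out-dominating set (OSODS). -/
def OSODS [DecidableEq V] (A : V → V → Prop) (S : Finset V) : Prop :=
  OutDom A S ∧ ∀ v : V, v ∉ S → ∃ u ∈ S, A u v ∧ OutDom A (insert v (S.erase u))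

/-- In-secure out-dominating set (ISODS). -/
def ISODS [DecidableEq V] (A : V → V → Prop) (S : Finset V) : Prop :=
  OutDom A S ∧ ∀ v : V, v ∉ S → ∃ u ∈ S, A v u ∧ OutDom A (insert v (S.erase u))

/-- Twin dominating set. -/
def TwinDom (A : V → V → Prop) (S : Finset V) : Prop :=
  ∀ v : V, v ∉ S → (∃ u ∈ S, A v u) ∧ (∃ u ∈ S, A u v)

/-- The out-domination number `γ⁺`. -/
noncomputable def gammaPlus [Fintype V] (A : V → V → Prop) : ℕ :=
  sInf {k | ∃ S : Finset V, OutDom A S ∧ S.card = k}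

/-- The in-domination number `γ⁻`. -/
noncomputable def gammaMinus [Fintype V] (A : V → V → Prop) : ℕ :=
  sInf {k | ∃ S : Finset V, InDom A S ∧ S.card = k}

/-- The secure domination number of the underlying undirected graph, `γ_s`. -/
noncomputable def gammaS [Fintype V] [DecidableEq V] (A : V → V → Prop) : ℕ :=
  sInf {k | ∃ S : Finset V, SDS A S ∧ S.card = k}

/-- The out-secure domination number `γ_os`. -/
noncomputable def gammaOS [Fintype V] [DecidableEq V] (A : V → V → Prop) : ℕ :=
  sInf {k | ∃ S : Finset V, OSDS A S ∧ S.card = k}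

/-- The secure out-domination number `γ_so`. -/
noncomputable def gammaSO [Fintype V] [DecidableEq V] (A : V → V → Prop) : ℕ :=
  sInf {k | ∃ S : Finset V, SODS A S ∧ S.card = k}

/-- The out-secure out-domination number `γ_oso`. -/
noncomputable def gammaOSO [Fintype V] [DecidableEq V] (A : V → V → Prop) : ℕ :=
  sInf {k | ∃ S : Finset V, OSODS A S ∧ S.card = k}

/-- The in-secure out-domination number `γ_iso`. -/
noncomputable def gammaISO [Fintype V] [DecidableEq V] (A : V → V → Prop) : ℕ :=
  sInf {k | ∃ S : Finset V, ISODS A S ∧ S.card = k}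

/-- The twin domination number `γ*`. -/
noncomputable def gammaTwin [Fintype V] (A : V → V → Prop) : ℕ :=
  sInf {k | ∃ S : Finset V, TwinDom A S ∧ S.card = k}

/-- Out-degree `d⁺(u)`. -/
noncomputable def outDeg (A : V → V → Prop) (u : V) : ℕ := Nat.card {v | A u v}

/-- In-degree `d⁻(u)`. -/
noncomputable def inDeg (A : V → V → Prop) (u : V) : ℕ := Nat.card {v | A v u}

/-- Maximum out-degree `Δ⁺`. -/
noncomputable def maxOutDeg [Fintype V] (A : V → V → Prop) : ℕ :=
  Finset.univ.sup fun u => outDeg A u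

/-- Minimum out-degree `δ⁺`. -/
noncomputable def minOutDeg (A : V → V → Prop) : ℕ := sInf (Set.range fun u => outDeg A u)

/-- Minimum in-degree `δ⁻`. -/
noncomputable def minInDeg (A : V → V → Prop) : ℕ := sInf (Set.range fun u => inDeg A u)

/-- The set of out-private neighbors `pn⁺(u,S)`: vertices `w` with `N⁻[w] ∩ S = {u}`. -/
def pnPlus (A : V → V → Prop) (S : Finset V) (u : V) : Set V :=
  {w | {x | A x w ∨ x = w} ∩ ↑S = {u}}

/-- The set of in-private neighbors `pn⁻(u,S)`: vertices `w` with `N⁺[w] ∩ S = {u}`. -/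
def pnMinus (A : V → V → Prop) (S : Finset V) (u : V) : Set V :=
  {w | {x | A w x ∨ x = w} ∩ ↑S = {u}}

/-- `A` is an orientation of the simple graph `G`. -/
def IsOrientation (G : SimpleGraph V) (A : V → V → Prop) : Prop :=
  (∀ u v : V, G.Adj u v ↔ (A u v ∨ A v u)) ∧ (∀ u v : V, A u v → ¬ A v u)

/-- The arc relation of the directed path `P_n` on `Fin n`. -/
def pathArc (n : ℕ) : Fin n → Fin n → Prop := fun i j => (i : ℕ) + 1 = (j : ℕ)

/-- The arc relation of the directed cycle `C_n` on `Fin n`. -/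
def cycleArc (n : ℕ) : Fin n → Fin n → Prop := fun i j => ((i : ℕ) + 1) % n = (j : ℕ)

theorem TwinDom.osds [DecidableEq V] {A : V → V → Prop}
    (hsym : ∀ u v : V, A u v → ¬ A v u) {S : Finset V} (hS : TwinDom A S) : OSDS A S := by
  refine ⟨fun v hv => ?_, fun v hv => ?_⟩
  · obtain ⟨-, u, hu, huv⟩ := hS v hv
    exact ⟨u, hu, Or.inl huv⟩
  · obtain ⟨-, u, hu, huv⟩ := hS v hv
    refine ⟨u, hu, huv, fun w hw => ?_⟩
    by_cases hwu : w = u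
    · subst hwu
      exact ⟨v, mem_insert_self _ _, Or.inr huv⟩
    · have hwS : w ∉ S := fun h => hw (mem_insert_of_mem (mem_erase.2 ⟨hwu, h⟩))
      obtain ⟨⟨x, hx, hwx⟩, y, hy, hyw⟩ := hS w hwS
      by_cases hxu : x = u
      · -- The in-neighbour `y` differs from `u = x`, as otherwise `w` and `x` form a symmetric pair.
        have hyu : y ≠ u := by
          rintro rfl
          subst hxu
          exact hsym _ _ hwx hyw
        exact ⟨y, mem_insert_of_mem (mem_erase.2 ⟨hyu, hy⟩), Or.inl hyw⟩
      · exact ⟨x, mem_insert_of_mem (mem_erase.2 ⟨hxu, hx⟩), Or.inr hwx⟩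

/-- `γ_os(D) ≤ γ*(D)` for digraphs without symmetric arcs. -/
theorem stmt_17 [Fintype V] [DecidableEq V] (A : V → V → Prop) (hloop : ∀ v : V, ¬ A v v)
    (hsym : ∀ u v : V, A u v → ¬ A v u) :
    gammaOS A ≤ gammaTwin A := by
  -- The whole vertex set is twin dominating, so the infimum defining `gammaTwin` is attained.
  have hne : {k | ∃ S : Finset V, TwinDom A S ∧ S.card = k}.Nonempty :=
    ⟨_, univ, fun v hv => absurd (mem_univ v) hv, rfl⟩
  obtain ⟨S, hS, hcard⟩ := Nat.sInf_mem hne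
  exact Nat.sInf_le ⟨S, hS.osds hsym, hcard⟩
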